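/- In any 8-schedule of the RAI instance I', for each ℓ∈[k+1], j∈[n], t∈[4], letting XM = FGMach(j,t) if ℓ=0 and XM = FSMach(ℓ−1,j,t) otherwise, and YM = BSMach(ℓ,j,t) if ℓ<k and YM = CMach(κ(j,t)) if ℓ=k, the bridge jobs BJob(ℓ,j,t,⊤) and BJob(ℓ,j,t,⊥) are assigned to their first or last eligible machine, i.e., to XM or YM, and each of the two machines XM, YM receives exactly one of these two jobs. -/

import Mathlib

/-! The bridge jobs of level `ℓ` live on a block of `8n` consecutive machines, the machines `XM` and
`YM` of all pairs `p = (j,t)` (`bridgeMach`), and these blocks for `ℓ = 0, …, k` tile everything to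
the right of the backward gateway machines.

* Every machine of the block receives a bridge job of level `ℓ` (`exists_bridge_mem`). Without
  bridge jobs its load is its private load plus gateway, sorting or clause jobs only, and no such
  total equals 8: on `FGMach` a sum of 4s and 5s would have to be 6, on `CMach` a sum of 6s and 7s
  would have to be 8, and on a sorting machine a sum of 6s, 7s, at most one 3 and at most one 4
  would have to be 5 or 8.
* There are `8n` bridge jobs of level `ℓ`, so each machine of the block receives exactly one.
* The eligibility intervals are nested: a bridge job of `p` can only use a machine of a pair `q`
  with `φ_ℓ(p) ≤ φ_ℓ(q)` (`bridge_eligible`). A bijection that never decreases `φ_ℓ` preserves the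
  sum of `φ_ℓ`, hence preserves `φ_ℓ` itself, so the jobs of `p` occupy the two machines of `p`. -/

open Finset

/-- A 3-SAT* instance: `n` variables, `2m` clauses of 3 literals each
(the first `m` are 1-in-3-clauses, the last `m` are 2-in-3-clauses).
`lit i s` is the literal at position `s` of clause `i`, given as a pair
(variable, polarity). The occurrence bijection `occ` maps the pair `(j,t)`
(the `t`-th occurrence of variable `x_j`, positive for `t = 0,1`, negative for
`t = 2,3`) to the corresponding (clause, position) pair; `occ_spec` says the
literal there is indeed `x_j` with the right polarity. Bijectivity of `occ`
encodes that every literal occurs exactly twice (and forces `6m = 4n`). -/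
structure SAT3Star where
  n : ℕ
  m : ℕ
  lit : Fin (2 * m) → Fin 3 → Fin n × Bool
  occ : (Fin n × Fin 4) ≃ (Fin (2 * m) × Fin 3)
  occ_spec : ∀ jt : Fin n × Fin 4,
    lit (occ jt).1 (occ jt).2 = (jt.1, decide ((jt.2 : ℕ) < 2))

/-- `α` satisfies the 3-SAT* instance: every `k`-in-3-clause has exactly `k`
true literals. -/
def SAT3Star.Satisfies (S : SAT3Star) (α : Fin S.n → Bool) : Prop :=
  ∀ i : Fin (2 * S.m),
    (Finset.univ.filter (fun s : Fin 3 => α (S.lit i s).1 = (S.lit i s).2)).card =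
      if (i : ℕ) < S.m then 1 else 2

/-- `⌊t/2⌋` as an element of `Fin 2`. -/
def half (t : Fin 4) : Fin 2 := ⟨(t : ℕ) / 2, by have := t.isLt; omega⟩

/-- Data of the bubble-sort process used in the reduction: `k` is the number of
transpositions, `φ ℓ p` is the position of the pair `p = (j,t)` in the sequence `φ_ℓ`
(each `φ ℓ` is a bijection onto `{0,…,4n-1}`), `φ 0` is the lexicographic order,
`φ k` is the order induced by the lexicographic order of `κ(j,t)`, and consecutive
sequences differ by one adjacent transposition swapping `big ℓ` (which moves right; this
is `ξ(ℓ)`) with `small ℓ`; each swapped pair is an inversion with respect to the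
lexicographic order of `κ`. -/
structure BubbleData (S : SAT3Star) where
  k : ℕ
  φ : Fin (k + 1) → (Fin S.n × Fin 4) → ℕ
  φ_lt : ∀ ℓ p, φ ℓ p < 4 * S.n
  φ_inj : ∀ ℓ, Function.Injective (φ ℓ)
  φ_zero : ∀ p : Fin S.n × Fin 4, φ 0 p = 4 * (p.1 : ℕ) + (p.2 : ℕ)
  φ_last : ∀ p : Fin S.n × Fin 4,
    φ (Fin.last k) p = 3 * ((S.occ p).1 : ℕ) + ((S.occ p).2 : ℕ)
  big : Fin k → Fin S.n × Fin 4
  small : Fin k → Fin S.n × Fin 4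
  step_adj : ∀ ℓ, φ ℓ.castSucc (small ℓ) = φ ℓ.castSucc (big ℓ) + 1
  step_big : ∀ ℓ, φ ℓ.succ (big ℓ) = φ ℓ.castSucc (big ℓ) + 1
  step_small : ∀ ℓ, φ ℓ.succ (small ℓ) = φ ℓ.castSucc (big ℓ)
  step_other : ∀ ℓ p, p ≠ big ℓ → p ≠ small ℓ → φ ℓ.succ p = φ ℓ.castSucc p
  step_inv : ∀ ℓ, ((S.occ (small ℓ)).1 : ℕ) < ((S.occ (big ℓ)).1 : ℕ) ∨
    ((S.occ (small ℓ)).1 = (S.occ (big ℓ)).1 ∧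
      ((S.occ (small ℓ)).2 : ℕ) < ((S.occ (big ℓ)).2 : ℕ))

/-- The machines of the RAI instance I'. -/
inductive IMach (n m k : ℕ) where
  | TMach : Fin n → Fin 2 → IMach n m k
  | BGMach : Fin n → Fin 4 → IMach n m k
  | FGMach : Fin n → Fin 4 → IMach n m k
  | BSMach : Fin k → Fin n → Fin 4 → IMach n m k
  | FSMach : Fin k → Fin n → Fin 4 → IMach n m k
  | CMach : Fin (2 * m) → Fin 3 → IMach n m k
  deriving DecidableEq, Fintype

/-- The jobs of the RAI instance I'; `PJob M` is the private load of machine `M`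
(of size 0 on the machines that carry no private load). -/
inductive IJob (n m k : ℕ) where
  | TJob : Fin n → IJob n m k
  | VJob : Fin n → Fin 4 → Bool → IJob n m k
  | GJob : Fin n → Fin 4 → Bool → IJob n m k
  | BJob : Fin (k + 1) → Fin n → Fin 4 → Bool → IJob n m k
  | SJob : Fin k → Fin n → Fin 4 → Bool → IJob n m k
  | CJob : Fin (2 * m) → Fin 3 → IJob n m k
  | PJob : IMach n m k → IJob n m k
  deriving DecidableEq, Fintype

variable (S : SAT3Star) (B : BubbleData S)

/-- Position of a machine in the left-to-right order of I'. -/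
def mpos : IMach S.n S.m B.k → ℕ
  | .TMach j q => 2 * (j : ℕ) + (q : ℕ)
  | .BGMach j t => 2 * S.n + (4 * S.n - 1 - (4 * (j : ℕ) + (t : ℕ)))
  | .FGMach j t => 6 * S.n + (4 * (j : ℕ) + (t : ℕ))
  | .BSMach ℓ j t =>
      10 * S.n + 8 * S.n * (ℓ : ℕ) + (4 * S.n - 1 - B.φ ℓ.castSucc (j, t))
  | .FSMach ℓ j t => 10 * S.n + 8 * S.n * (ℓ : ℕ) + 4 * S.n + B.φ ℓ.succ (j, t)
  | .CMach i s => 10 * S.n + 8 * S.n * B.k + (6 * S.m - 1 - (3 * (i : ℕ) + (s : ℕ)))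

/-- Size of the private load of a machine (0 where there is none). -/
def psize : IMach S.n S.m B.k → ℕ
  | .TMach _ _ => 2
  | .BGMach _ _ => 1
  | .FGMach _ _ => 2
  | .BSMach ℓ j t => if (j, t) = B.big ℓ then 3 else 0
  | .FSMach ℓ j t => if (j, t) = B.big ℓ then 3 else 0
  | .CMach _ _ => 0

/-- Sizes of the jobs of I'. -/
def jsize : IJob S.n S.m B.k → ℕ
  | .TJob _ => 2
  | .VJob _ _ b => if b then 3 else 2
  | .GJob _ _ b => if b then 4 else 5
  | .BJob _ _ _ b => if b then 2 else 1
  | .SJob ℓ j t b =>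
      if (j, t) = B.big ℓ then (if b then 3 else 4) else (if b then 6 else 7)
  | .CJob i s =>
      if (s : ℕ) = 0 then 6
      else if (s : ℕ) = 1 then 7
      else if (i : ℕ) < S.m then 7 else 6
  | .PJob M => psize S B M

/-- The first (left-most) eligible machine of a job. -/
def firstM : IJob S.n S.m B.k → IMach S.n S.m B.k
  | .TJob j => .TMach j 0
  | .VJob j t _ => .TMach j ⟨(t : ℕ) / 2, by have := t.isLt; omega⟩
  | .GJob j t _ => .BGMach j t
  | .BJob ℓ j t _ =>
      if h : (ℓ : ℕ) = 0 then .FGMach j t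
      else .FSMach ⟨(ℓ : ℕ) - 1, by have := ℓ.isLt; omega⟩ j t
  | .SJob ℓ j t _ => .BSMach ℓ j t
  | .CJob i _ => .CMach i 2
  | .PJob M => M

/-- The last (right-most) eligible machine of a job. -/
def lastM : IJob S.n S.m B.k → IMach S.n S.m B.k
  | .TJob j => .TMach j 1
  | .VJob j t _ => .BGMach j t
  | .GJob j t _ => .FGMach j t
  | .BJob ℓ j t _ =>
      if h : (ℓ : ℕ) < B.k then .BSMach ⟨(ℓ : ℕ), h⟩ j t
      else .CMach (S.occ (j, t)).1 (S.occ (j, t)).2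
  | .SJob ℓ j t _ => .FSMach ℓ j t
  | .CJob i _ => .CMach i 0
  | .PJob M => M

/-- A job is eligible exactly on the machines lying (in the machine order) between its
first and its last eligible machine. -/
def ielig (job : IJob S.n S.m B.k) (M : IMach S.n S.m B.k) : Prop :=
  mpos S B (firstM S B job) ≤ mpos S B M ∧ mpos S B M ≤ mpos S B (lastM S B job)

/-- Load of a machine under a schedule. -/
def iload (σ : IJob S.n S.m B.k → IMach S.n S.m B.k) (M : IMach S.n S.m B.k) : ℕ :=
  ∑ j ∈ Finset.univ.filter (fun j => σ j = M), jsize S B j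

/-- An 8-schedule: every job on an eligible machine, every machine with load exactly 8. -/
def EightSchedule (σ : IJob S.n S.m B.k → IMach S.n S.m B.k) : Prop :=
  (∀ j, ielig S B j (σ j)) ∧ ∀ M, iload S B σ M = 8

/-! ### Positions of the machines -/

/-- The two end machines of the bridge jobs of level `ℓ` and pair `p`: the first eligible machine
for `true`, the last one for `false`. -/
def bridgeMach (ℓ : Fin (B.k + 1)) (x : (Fin S.n × Fin 4) × Bool) : IMach S.n S.m B.k :=
  if x.2 then firstM S B (.BJob ℓ x.1.1 x.1.2 true) else lastM S B (.BJob ℓ x.1.1 x.1.2 true)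

lemma six_m_eq : 6 * S.m = 4 * S.n := by
  have h := Fintype.card_congr S.occ
  simp only [Fintype.card_prod, Fintype.card_fin] at h
  omega

lemma mul_block_le (n : ℕ) {a b : ℕ} (h : a < b) : 8 * n * a + 8 * n ≤ 8 * n * b := by
  have := Nat.mul_le_mul_left (8 * n) (Nat.succ_le_of_lt h)
  rwa [Nat.mul_succ] at this

lemma mpos_bridge_first (ℓ : Fin (B.k + 1)) (p : Fin S.n × Fin 4) (b : Bool) :
    mpos S B (firstM S B (.BJob ℓ p.1 p.2 b)) = 6 * S.n + 8 * S.n * ℓ + B.φ ℓ p := by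
  obtain ⟨l, hl⟩ := ℓ
  obtain ⟨j, t⟩ := p
  cases l with
  | zero =>
    have := B.φ_zero (j, t)
    simp only [firstM, mpos, dite_true, Nat.mul_zero, Nat.add_zero]
    change _ = 6 * S.n + B.φ 0 (j, t)
    rw [this]
  | succ l =>
    have hs : (⟨l, by omega⟩ : Fin B.k).succ = ⟨l + 1, hl⟩ := rfl
    simp only [firstM, mpos, Nat.add_eq_zero_iff, one_ne_zero, and_false, dite_false,
      Nat.add_sub_cancel, hs, Nat.mul_succ]
    omega

lemma mpos_bridge_last (ℓ : Fin (B.k + 1)) (p : Fin S.n × Fin 4) (b : Bool) :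
    mpos S B (lastM S B (.BJob ℓ p.1 p.2 b)) =
      10 * S.n + 8 * S.n * ℓ + (4 * S.n - 1 - B.φ ℓ p) := by
  obtain ⟨j, t⟩ := p
  by_cases h : (ℓ : ℕ) < B.k
  · simp only [lastM, h, dite_true, mpos]
    rfl
  · have hk : ℓ = Fin.last B.k := Fin.ext (by have := ℓ.isLt; simp only [Fin.val_last]; omega)
    subst hk
    have := B.φ_last (j, t)
    have := six_m_eq S
    simp only [Fin.val_last, lastM]
    rw [dif_neg (lt_irrefl B.k)]
    simp only [mpos]
    omega

lemma mpos_bridgeMach (ℓ : Fin (B.k + 1)) (p : Fin S.n × Fin 4) (c : Bool) :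
    mpos S B (bridgeMach S B ℓ (p, c)) = 6 * S.n + 8 * S.n * ℓ +
      if c then B.φ ℓ p else 4 * S.n + (4 * S.n - 1 - B.φ ℓ p) := by
  cases c
  · have := mpos_bridge_last S B ℓ p true
    simp only [bridgeMach, Bool.false_eq_true, if_false]
    omega
  · exact mpos_bridge_first S B ℓ p true

/-- The bridge blocks tile all machines other than truth and backward gateway machines. -/
lemma exists_bridgeMach (M : IMach S.n S.m B.k) (hM : 6 * S.n ≤ mpos S B M) :
    ∃ ℓ x, M = bridgeMach S B ℓ x := by
  cases M with
  | TMach j q => have := j.isLt; simp only [mpos] at hM; omega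
  | BGMach j t => have := j.isLt; simp only [mpos] at hM; omega
  | FGMach j t => exact ⟨0, ((j, t), true), by simp [bridgeMach, firstM]⟩
  | BSMach ℓ j t => exact ⟨ℓ.castSucc, ((j, t), false), by simp [bridgeMach, lastM]⟩
  | FSMach ℓ j t => exact ⟨ℓ.succ, ((j, t), true), by simp [bridgeMach, firstM]⟩
  | CMach i s =>
    exact ⟨Fin.last _, (S.occ.symm (i, s), false), by simp [bridgeMach, lastM]⟩

/-- The position of a bridge machine determines its level: the blocks are disjoint. -/
lemma level_eq_of_mpos {ℓ ℓ' : Fin (B.k + 1)} {x : (Fin S.n × Fin 4) × Bool}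
    (h1 : 6 * S.n + 8 * S.n * ℓ ≤ mpos S B (bridgeMach S B ℓ' x))
    (h2 : mpos S B (bridgeMach S B ℓ' x) < 6 * S.n + 8 * S.n * ℓ + 8 * S.n) : ℓ' = ℓ := by
  obtain ⟨p, c⟩ := x
  rw [mpos_bridgeMach] at h1 h2
  have := B.φ_lt ℓ' p
  rcases lt_trichotomy (ℓ' : ℕ) ℓ with h | h | h
  · have := mul_block_le S.n h
    split_ifs at h1 <;> omega
  · exact Fin.ext h
  · have := mul_block_le S.n h
    omega

/-- A bridge job of the pair `p` can only be processed on bridge machines of its own level and of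
pairs at or after `p` in the sequence `φ_ℓ`. -/
lemma bridge_eligible {ℓ : Fin (B.k + 1)} {p : Fin S.n × Fin 4} {b : Bool}
    {M : IMach S.n S.m B.k} (h : ielig S B (.BJob ℓ p.1 p.2 b) M) :
    ∃ x, M = bridgeMach S B ℓ x ∧ B.φ ℓ p ≤ B.φ ℓ x.1 := by
  obtain ⟨h1, h2⟩ := h
  rw [mpos_bridge_first] at h1
  rw [mpos_bridge_last] at h2
  have hp := B.φ_lt ℓ p
  obtain ⟨ℓ', ⟨q, c⟩, rfl⟩ := exists_bridgeMach S B M (by omega)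
  obtain rfl : ℓ' = ℓ := level_eq_of_mpos S B (x := (q, c)) (by omega) (by omega)
  refine ⟨_, rfl, ?_⟩
  rw [mpos_bridgeMach] at h1 h2
  have hq := B.φ_lt ℓ' q
  show B.φ ℓ' p ≤ B.φ ℓ' q
  split_ifs at h1 h2 <;> omega

lemma bridgeMach_inj {ℓ ℓ' : Fin (B.k + 1)} {x x' : (Fin S.n × Fin 4) × Bool}
    (h : bridgeMach S B ℓ x = bridgeMach S B ℓ' x') : ℓ = ℓ' ∧ x = x' := by
  obtain ⟨p, c⟩ := x
  obtain ⟨p', c'⟩ := x'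
  have hm := congrArg (mpos S B) h
  have e' := mpos_bridgeMach S B ℓ' p' c'
  have hp' := B.φ_lt ℓ' p'
  have hl : ℓ = ℓ' := by
    apply level_eq_of_mpos S B (x := (p, c)) <;> rw [hm, e'] <;> split_ifs <;> omega
  subst hl
  have e := mpos_bridgeMach S B ℓ p c
  have hp := B.φ_lt ℓ p
  refine ⟨rfl, ?_⟩
  have key : B.φ ℓ p = B.φ ℓ p' ∧ c = c' := by
    cases c <;> cases c' <;> simp at e e' ⊢ <;> omega
  rw [B.φ_inj ℓ key.1, key.2]

lemma mpos_injective : Function.Injective (mpos S B) := by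
  intro M M' h
  by_cases hM : 6 * S.n ≤ mpos S B M
  · obtain ⟨ℓ, x, rfl⟩ := exists_bridgeMach S B M hM
    obtain ⟨ℓ', x', rfl⟩ := exists_bridgeMach S B M' (h ▸ hM)
    obtain ⟨p, c⟩ := x
    obtain ⟨p', c'⟩ := x'
    have e := mpos_bridgeMach S B ℓ p c
    have e' := mpos_bridgeMach S B ℓ' p' c'
    have hp := B.φ_lt ℓ p
    have hp' := B.φ_lt ℓ' p'
    have hl : ℓ = ℓ' := by
      apply level_eq_of_mpos S B (x := (p, c)) <;> rw [h, e'] <;> split_ifs <;> omega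
    subst hl
    have key : B.φ ℓ p = B.φ ℓ p' ∧ c = c' := by
      cases c <;> cases c' <;> simp at e e' ⊢ <;> omega
    rw [B.φ_inj ℓ key.1, key.2]
  · cases M <;> cases M' <;> simp only [mpos] at h hM <;>
      first
      | omega
      | (rename_i j q j' q'
         have := j.isLt
         have := j'.isLt
         have hj : j = j' := Fin.ext (by omega)
         have hq : q = q' := Fin.ext (by omega)
         rw [hj, hq])

/-! ### Loads without bridge jobs -/

/-- The jobs other than the private load that a schedule puts on `M`. -/
def otherJobs (σ : IJob S.n S.m B.k → IMach S.n S.m B.k) (M : IMach S.n S.m B.k) :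
    Finset (IJob S.n S.m B.k) :=
  (univ.filter (fun j => σ j = M)).erase (.PJob M)

variable {S B}

lemma sigma_private {σ : IJob S.n S.m B.k → IMach S.n S.m B.k} (h : EightSchedule S B σ)
    (M : IMach S.n S.m B.k) : σ (.PJob M) = M :=
  mpos_injective S B (le_antisymm (h.1 (.PJob M)).2 (h.1 (.PJob M)).1)

lemma sum_otherJobs {σ : IJob S.n S.m B.k → IMach S.n S.m B.k} (h : EightSchedule S B σ)
    (M : IMach S.n S.m B.k) :
    psize S B M + ∑ j ∈ otherJobs S B σ M, jsize S B j = 8 := by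
  rw [← h.2 M, iload]
  have hm : IJob.PJob M ∈ univ.filter (fun j => σ j = M) :=
    mem_filter.2 ⟨mem_univ _, sigma_private h M⟩
  exact Finset.add_sum_erase _ (jsize S B) hm

/-- A job on `M` other than its private load is no private load and is eligible on `M`. -/
lemma of_mem_otherJobs {σ : IJob S.n S.m B.k → IMach S.n S.m B.k} (h : EightSchedule S B σ)
    {M : IMach S.n S.m B.k} {a : IJob S.n S.m B.k} (ha : a ∈ otherJobs S B σ M) :
    (∀ M', a ≠ .PJob M') ∧ σ a = M ∧ ielig S B a M := by
  simp only [otherJobs, mem_erase, mem_filter, mem_univ, true_and] at ha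
  refine ⟨?_, ha.2, ha.2 ▸ h.1 a⟩
  rintro M' rfl
  have := sigma_private h M'
  exact ha.1 (by rw [← ha.2, this])

lemma sum_between {ι : Type*} (F : Finset ι) (f : ι → ℕ) (a b : ℕ)
    (h : ∀ i ∈ F, a ≤ f i ∧ f i ≤ b) : a * #F ≤ ∑ i ∈ F, f i ∧ ∑ i ∈ F, f i ≤ b * #F := by
  constructor
  · have := Finset.card_nsmul_le_sum F f a (fun i hi => (h i hi).1)
    simpa [mul_comm] using this
  · have := Finset.sum_le_card_nsmul F f b (fun i hi => (h i hi).2)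
    simpa [mul_comm] using this

/-- A sum of 6s and 7s with at most one extra 3 and one extra 4 is neither 5 nor 8. -/
lemma sum_sorting_ne {ι : Type*} [DecidableEq ι] (F : Finset ι) (f : ι → ℕ) (u v : ι)
    (hu : f u = 3) (hv : f v = 4)
    (h : ∀ i ∈ F, i ≠ u → i ≠ v → 6 ≤ f i ∧ f i ≤ 7) :
    ∑ i ∈ F, f i ≠ 5 ∧ ∑ i ∈ F, f i ≠ 8 := by
  have hb := sum_between ((F.erase u).erase v) f 6 7 (fun i hi => by
    simp only [mem_erase] at hi
    exact h i hi.2.2 hi.2.1 hi.1)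
  have h1 : ∑ i ∈ F, f i = ∑ i ∈ F.erase u, f i ∨
      ∑ i ∈ F, f i = 3 + ∑ i ∈ F.erase u, f i := by
    by_cases hF : u ∈ F
    · right; rw [← hu, Finset.add_sum_erase _ _ hF]
    · left; rw [Finset.erase_eq_of_notMem hF]
  have h2 : ∑ i ∈ F.erase u, f i = ∑ i ∈ (F.erase u).erase v, f i ∨
      ∑ i ∈ F.erase u, f i = 4 + ∑ i ∈ (F.erase u).erase v, f i := by
    by_cases hF : v ∈ F.erase u
    · right; rw [← hv, Finset.add_sum_erase _ _ hF]
    · left; rw [Finset.erase_eq_of_notMem hF]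
  omega

/-- Truth, variable and gateway jobs are only eligible to the left of the sorting machines. -/
lemma mpos_last_lt :
    (∀ j, mpos S B (lastM S B (.TJob j)) < 6 * S.n) ∧
    (∀ j t b, mpos S B (lastM S B (.VJob j t b)) < 6 * S.n) ∧
    (∀ j t b, mpos S B (lastM S B (.GJob j t b)) < 10 * S.n) := by
  refine ⟨fun j => ?_, fun j t b => ?_, fun j t b => ?_⟩ <;> have := j.isLt <;>
    simp only [lastM, mpos] <;> omega

/-- The interval of a sorting job of level `ℓ` lies in the `ℓ`-th group of sorting machines. -/
lemma sort_bounds {ℓ : Fin B.k} {j : Fin S.n} {t : Fin 4} {b : Bool} {M : IMach S.n S.m B.k}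
    (h : ielig S B (.SJob ℓ j t b) M) :
    10 * S.n + 8 * S.n * ℓ ≤ mpos S B M ∧ mpos S B M < 10 * S.n + 8 * S.n * ℓ + 8 * S.n := by
  have h1 : mpos S B (.BSMach ℓ j t) ≤ mpos S B M := h.1
  have h2 : mpos S B M ≤ mpos S B (.FSMach ℓ j t) := h.2
  have := B.φ_lt ℓ.succ (j, t)
  simp only [mpos.eq_4, mpos.eq_5] at h1 h2
  omega

lemma clause_bound {i : Fin (2 * S.m)} {s : Fin 3} {M : IMach S.n S.m B.k}
    (h : ielig S B (.CJob i s) M) : 10 * S.n + 8 * S.n * B.k ≤ mpos S B M := by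
  have h1 : mpos S B (.CMach i 2) ≤ mpos S B M := h.1
  simp only [mpos.eq_6] at h1
  omega

/-- Sorting jobs that are not jobs of the moving pair `ξ(ℓ)` have size 6 or 7, so a sorting
machine of level `ℓ` cannot be filled without bridge jobs. -/
lemma exists_bridge_sorting {σ : IJob S.n S.m B.k → IMach S.n S.m B.k} (h : EightSchedule S B σ)
    (M : IMach S.n S.m B.k) (ℓ : Fin B.k)
    (h1 : 10 * S.n + 8 * S.n * ℓ ≤ mpos S B M)
    (h2 : mpos S B M < 10 * S.n + 8 * S.n * ℓ + 8 * S.n)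
    (hp : psize S B M = 0 ∨ psize S B M = 3) :
    ∃ ℓ' p b, σ (.BJob ℓ' (Prod.fst p) (Prod.snd p) b) = M := by
  by_contra! hno
  have hsum := sum_otherJobs h M
  have := sum_sorting_ne (otherJobs S B σ M) (jsize S B)
    (.SJob ℓ (B.big ℓ).1 (B.big ℓ).2 true) (.SJob ℓ (B.big ℓ).1 (B.big ℓ).2 false)
    (by simp [jsize]) (by simp [jsize]) (by
      intro a ha hu hv
      obtain ⟨hP, hs, he⟩ := of_mem_otherJobs h ha
      obtain ⟨hT, hV, hG⟩ := mpos_last_lt (S := S) (B := B)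
      cases a with
      | TJob j => have := he.2; have := hT j; omega
      | VJob j t b => have := he.2; have := hV j t b; omega
      | GJob j t b => have := he.2; have := hG j t b; omega
      | BJob l j t b => exact absurd hs (hno l (j, t) b)
      | PJob M' => exact absurd rfl (hP M')
      | CJob i s =>
        have := clause_bound he
        have := mul_block_le S.n ℓ.isLt
        omega
      | SJob l j t b =>
        have hb := sort_bounds he
        have hl : l = ℓ := by
          rcases lt_trichotomy (l : ℕ) ℓ with hlt | heq | hlt
          · have := mul_block_le S.n hlt; omega
          · exact Fin.ext heq
          · have := mul_block_le S.n hlt; omega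
        subst hl
        have hne : (j, t) ≠ B.big l := by
          intro hx
          rw [← hx] at hu hv
          cases b
          · exact hv rfl
          · exact hu rfl
        cases b <;> simp [jsize, hne])
  omega

/-- Every machine outside the truth and backward gateway machines processes a bridge job. -/
lemma exists_bridge_mem {σ : IJob S.n S.m B.k → IMach S.n S.m B.k} (h : EightSchedule S B σ)
    (M : IMach S.n S.m B.k) (hM : 6 * S.n ≤ mpos S B M) :
    ∃ ℓ p b, σ (.BJob ℓ (Prod.fst p) (Prod.snd p) b) = M := by
  obtain ⟨hT, hV, hG⟩ := mpos_last_lt (S := S) (B := B)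
  cases M with
  | TMach j q => have := j.isLt; simp only [mpos] at hM; omega
  | BGMach j t => have := j.isLt; simp only [mpos] at hM; omega
  | BSMach ℓ j t =>
    have := B.φ_lt ℓ.castSucc (j, t)
    refine exists_bridge_sorting h _ ℓ ?_ ?_ ?_ <;> simp only [mpos, psize]
    · omega
    · omega
    · split_ifs <;> simp
  | FSMach ℓ j t =>
    have := B.φ_lt ℓ.succ (j, t)
    refine exists_bridge_sorting h _ ℓ ?_ ?_ ?_ <;> simp only [mpos, psize]
    · omega
    · omega
    · split_ifs <;> simp
  | FGMach j t =>
    by_contra! hno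
    have hsum := sum_otherJobs h (.FGMach j t)
    have hpos : mpos S B (.FGMach j t) < 10 * S.n := by
      have := j.isLt
      simp only [mpos]
      omega
    have := sum_between (otherJobs S B σ (.FGMach j t)) (jsize S B) 4 5 (by
      intro a ha
      obtain ⟨hP, hs, he⟩ := of_mem_otherJobs h ha
      cases a with
      | TJob j => have := he.2; have := hT j; omega
      | VJob j t b => have := he.2; have := hV j t b; omega
      | GJob j t b => cases b <;> simp [jsize]
      | BJob l j t b => exact absurd hs (hno l (j, t) b)
      | PJob M' => exact absurd rfl (hP M')
      | CJob i s => have := clause_bound he; omega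
      | SJob l j t b => have := sort_bounds he; omega)
    simp only [psize] at hsum
    omega
  | CMach i s =>
    by_contra! hno
    have hsum := sum_otherJobs h (.CMach i s)
    have hpos : 10 * S.n + 8 * S.n * B.k ≤ mpos S B (.CMach i s) := by
      simp only [mpos]
      omega
    have := sum_between (otherJobs S B σ (.CMach i s)) (jsize S B) 6 7 (by
      intro a ha
      obtain ⟨hP, hs, he⟩ := of_mem_otherJobs h ha
      cases a with
      | TJob j => have := he.2; have := hT j; omega
      | VJob j t b => have := he.2; have := hV j t b; omega
      | GJob j t b => have := he.2; have := hG j t b; omega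
      | BJob l j t b => exact absurd hs (hno l (j, t) b)
      | PJob M' => exact absurd rfl (hP M')
      | CJob i s => simp only [jsize]; split_ifs <;> simp
      | SJob l j t b =>
        have := sort_bounds he
        have := mul_block_le S.n l.isLt
        omega)
    simp only [psize] at hsum
    omega

/-! ### Assignment of the bridge jobs -/

/-- A permutation that never decreases the `ℕ`-valued label of an element preserves all labels. -/
lemma label_eq_of_le {α : Type*} [Fintype α] (f : α → α) (hf : Function.Bijective f)
    (g : α → ℕ) (h : ∀ x, g x ≤ g (f x)) (x : α) : g x = g (f x) :=
  (Finset.sum_eq_sum_iff_of_le (fun i _ => h i)).1 (hf.sum_comp g).symm x (mem_univ x)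

variable (S B)

/-- in any 8-schedule, the two bridge jobs `BJob(ℓ,j,t,⊤)` and
`BJob(ℓ,j,t,⊥)` go to their first eligible machine `XM` (which is `FGMach(j,t)` if
`ℓ = 0` and `FSMach(ℓ-1,j,t)` otherwise) or their last eligible machine `YM` (which is
`BSMach(ℓ,j,t)` if `ℓ < k` and `CMach(κ(j,t))` otherwise), one to each. -/
theorem statement16 (σ : IJob S.n S.m B.k → IMach S.n S.m B.k)
    (h : EightSchedule S B σ) (ℓ : Fin (B.k + 1)) (j : Fin S.n) (t : Fin 4) :
    (σ (.BJob ℓ j t true) = firstM S B (.BJob ℓ j t true) ∧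
      σ (.BJob ℓ j t false) = lastM S B (.BJob ℓ j t false)) ∨
    (σ (.BJob ℓ j t false) = firstM S B (.BJob ℓ j t false) ∧
      σ (.BJob ℓ j t true) = lastM S B (.BJob ℓ j t true)) := by
  have hex : ∀ y : (Fin S.n × Fin 4) × Bool, ∃ x,
      σ (.BJob ℓ y.1.1 y.1.2 y.2) = bridgeMach S B ℓ x ∧ B.φ ℓ y.1 ≤ B.φ ℓ x.1 :=
    fun y => bridge_eligible S B (h.1 _)
  choose f hf hle using hex
  have hsurj : Function.Surjective f := by
    rintro ⟨q, c⟩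
    obtain ⟨ℓ', p, b, hb⟩ := exists_bridge_mem h (bridgeMach S B ℓ (q, c))
      (by rw [mpos_bridgeMach]; omega)
    obtain ⟨x, hx, -⟩ := bridge_eligible S B (h.1 (.BJob ℓ' p.1 p.2 b))
    obtain ⟨rfl, -⟩ := bridgeMach_inj S B (hb.symm.trans hx)
    exact ⟨(p, b), ((bridgeMach_inj S B (hb.symm.trans (hf (p, b)))).2).symm⟩
  have hinj : Function.Injective f := Finite.injective_iff_surjective.2 hsurj
  have hfst : ∀ y, (f y).1 = y.1 := fun y =>
    (B.φ_inj ℓ (label_eq_of_le f ⟨hinj, hsurj⟩ (fun x => B.φ ℓ x.1) hle y)).symm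
  have ht := hfst ((j, t), true)
  have hb := hfst ((j, t), false)
  have hne : f ((j, t), true) ≠ f ((j, t), false) := fun e => by simpa using hinj e
  have st := hf ((j, t), true)
  have sb := hf ((j, t), false)
  revert ht hb hne st sb
  generalize f ((j, t), true) = u
  generalize f ((j, t), false) = v
  obtain ⟨p, c⟩ := u
  obtain ⟨q, d⟩ := v
  rintro rfl rfl hne st sb
  cases c <;> cases d
  · exact absurd rfl hne
  · exact Or.inr ⟨sb, st⟩
  · exact Or.inl ⟨st, sb⟩
  · exact absurd rfl hne
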